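/- Suppose that every compact A-minimal subset of X is a single compact A-orbit. Then for every root α and every compact A-minimal subset Y ⊆ X, the set Y is also A_α-minimal; that is, every A_α-orbit in Y is dense in Y. -/

import Mathlib

/-! By hypothesis `Y` is a single compact orbit `A z`, `z = gΓ`. Let `Λ` be the stabilizer of `z` in
`A`. Since `A_α` is the kernel of `α`, the orbit `A_α z` is dense in `A z` as soon as `α(Λ)` is dense
in `ℝ_{>0}`. A subgroup of the line is dense or cyclic, so the point is to exclude that `α(Λ)` is
cyclic.

* The orbit map `A → A z` is open (a Baire category argument), so `Λ` is cocompact in `A`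
  (`exists_bounded_sweep`). If `α(Λ)` were cyclic, `Λ ∩ A_α` would be cocompact in `A_α`; as `n ≥ 3`,
  it would contain some `a` with `a_i = a_j` and with `a_k > a_l` for all `l ≠ k`, where
  `k ≠ i, j` is a fixed index (`exists_dominating`).
* Compactness also shows that no nonzero vector of the lattice `gℤⁿ` has a zero coordinate: `A` would
  contract such a vector to zero (`coord_ne_zero`).
* Now `a g = g γ` with `γ ∈ SL_n(ℤ)`. For `p ∈ ℤ[X]`, coordinatewise multiplication by the `p(a_l)`
  preserves `gℤⁿ`; hence if `p` vanishes at one `a_l`, it vanishes at all of them. The derivative of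
  the characteristic polynomial of `γ` vanishes at the multiple root `a_i = a_j` but not at the
  simple root `a_k`, a contradiction (`no_mixed_multiplicity`).

The group `A` is parametrized by `ℝⁿ` through `expDiag`, which turns `Λ` into an additive subgroup
`stab` of `ℝⁿ` and `α` into the linear form `t ↦ t_i - t_j`. -/


open Matrix MeasureTheory Pointwise

/-- `G = SL_n(ℝ)`. -/
abbrev SLR (n : ℕ) := Matrix.SpecialLinearGroup (Fin n) ℝ

/-- The standard topology on `SL_n(ℝ)`, as a subspace of the matrices. -/
instance (n : ℕ) : TopologicalSpace (SLR n) :=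
  inferInstanceAs (TopologicalSpace {A : Matrix (Fin n) (Fin n) ℝ // A.det = 1})

/-- `Γ = SL_n(ℤ)`, viewed as a subgroup of `SL_n(ℝ)`. -/
def GammaZ (n : ℕ) : Subgroup (SLR n) :=
  (Matrix.SpecialLinearGroup.map (n := Fin n) (Int.castRingHom ℝ)).range

/-- `A`: the set of diagonal matrices in `SL_n(ℝ)` with positive diagonal entries. -/
def posDiag (n : ℕ) : Set (SLR n) :=
  {g | (∀ i j, i ≠ j → g.1 i j = 0) ∧ (∀ i, 0 < g.1 i i)}

/-- `A_α`: the kernel of the root `α = α_{ij}`, `α(a) = a_{ii}/a_{jj}`, i.e. the set of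
`a ∈ A` with `a_{ii} = a_{jj}`. -/
def rootKer (n : ℕ) (i j : Fin n) : Set (SLR n) :=
  {g | g ∈ posDiag n ∧ g.1 i i = g.1 j j}

/-- `u_α(s) = I + s E_{ij}`, an element of the root group `U_α`. -/
noncomputable def elemU (n : ℕ) {i j : Fin n} (hij : i ≠ j) (s : ℝ) : SLR n :=
  ⟨Matrix.transvection i j s, Matrix.det_transvection_of_ne i j hij s⟩

/-- A nonempty subset `Z` is `S`-minimal if it is invariant under each element of `S`
and every `S`-orbit of a point of `Z` is dense in `Z`. -/
def IsMinimalOn {G X : Type*} [SMul G X] [TopologicalSpace X] (S : Set G) (Z : Set X) : Prop :=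
  Z.Nonempty ∧ (∀ g ∈ S, (g • ·) '' Z = Z) ∧ ∀ z ∈ Z, Z ⊆ closure ((· • z) '' S)

/-- `Γ` is a lattice in `G`: a discrete subgroup such that `G/Γ` carries a (nonzero)
finite `G`-invariant Borel measure. -/
def IsLattice {G : Type*} [Group G] [TopologicalSpace G] (Γ : Subgroup G) : Prop :=
  DiscreteTopology Γ ∧
    ∃ μ : @Measure (G ⧸ Γ) (borel _),
      μ Set.univ ≠ 0 ∧ μ Set.univ ≠ ⊤ ∧
      ∀ (g : G) (s : Set (G ⧸ Γ)), μ ((g • ·) ⁻¹' s) = μ s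

/-! ### The group `SL_n(ℝ)` and the quotient `X` -/

instance instIsTopologicalGroupSLR (n : ℕ) : IsTopologicalGroup (SLR n) :=
  Matrix.SpecialLinearGroup.topologicalGroup

theorem continuous_entry (n : ℕ) (i j : Fin n) : Continuous fun g : SLR n => g.1 i j :=
  (continuous_subtype_val : Continuous fun g : SLR n => g.1).matrix_elem i j

theorem isClosed_GammaZ (n : ℕ) : IsClosed (GammaZ n : Set (SLR n)) := by
  have h : (GammaZ n : Set (SLR n)) =
      ⋂ i, ⋂ j, (fun g : SLR n => g.1 i j) ⁻¹' Set.range ((↑) : ℤ → ℝ) := by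
    ext g
    simp only [Set.mem_iInter, Set.mem_preimage, Set.mem_range, SetLike.mem_coe]
    constructor
    · rintro ⟨γ, rfl⟩ i j
      exact ⟨γ.1 i j, rfl⟩
    · intro h
      choose M hM using h
      have hMg : (Matrix.of M).map (Int.castRingHom ℝ) = g.1 := by
        ext i j
        simp [hM]
      have hdet : (Matrix.of M).det = 1 := by
        have h1 := RingHom.map_det (Int.castRingHom ℝ) (Matrix.of M)
        rw [RingHom.mapMatrix_apply, hMg, g.2] at h1
        rw [eq_intCast] at h1
        exact_mod_cast h1
      exact ⟨⟨Matrix.of M, hdet⟩, Subtype.ext hMg⟩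
  rw [h]
  exact isClosed_iInter fun i => isClosed_iInter fun j =>
    Int.isClosedEmbedding_coe_real.isClosed_range.preimage (continuous_entry n i j)

/-- `Γ` is closed, so the quotient by it is Hausdorff although `Γ` is not normal. -/
instance instT2SpaceQuotient (n : ℕ) : T2Space (SLR n ⧸ GammaZ n) := by
  rw [t2Space_iff_of_isOpenQuotientMap QuotientGroup.isOpenQuotientMap_mk]
  have h : {q : SLR n × SLR n | (q.1 : SLR n ⧸ GammaZ n) = q.2} =
      (fun q : SLR n × SLR n => q.1⁻¹ * q.2) ⁻¹' (GammaZ n : Set (SLR n)) := by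
    ext q
    exact QuotientGroup.eq
  rw [h]
  exact (isClosed_GammaZ n).preimage (by fun_prop)

/-! ### The exponential parametrization of `A` -/

/-- The average of the coordinates of `t`. -/
noncomputable def avg {n : ℕ} (t : Fin n → ℝ) : ℝ := (∑ l, t l) / n

/-- The diagonal matrix with entries `exp (t l - avg t)`, an element of `A`. Subtracting the
average makes it defined on all of `ℝⁿ`, with the constant vectors in its kernel. -/
noncomputable def expDiag {n : ℕ} (hn : n ≠ 0) (t : Fin n → ℝ) : SLR n :=
  ⟨Matrix.diagonal fun l => Real.exp (t l - avg t), by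
    have : (n : ℝ) ≠ 0 := by exact_mod_cast hn
    rw [Matrix.det_diagonal, ← Real.exp_sum, Finset.sum_sub_distrib]
    simp [avg]
    field_simp
    simp⟩

theorem expDiag_val {n : ℕ} (hn : n ≠ 0) (t : Fin n → ℝ) :
    (expDiag hn t).1 = Matrix.diagonal fun l => Real.exp (t l - avg t) := rfl

theorem expDiag_zero {n : ℕ} (hn : n ≠ 0) : expDiag hn 0 = 1 := by
  apply Subtype.ext
  simp [expDiag_val, avg]

theorem avg_add {n : ℕ} (s t : Fin n → ℝ) : avg (s + t) = avg s + avg t := by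
  simp [avg, Finset.sum_add_distrib, add_div]

theorem expDiag_add {n : ℕ} (hn : n ≠ 0) (s t : Fin n → ℝ) :
    expDiag hn (s + t) = expDiag hn s * expDiag hn t := by
  apply Subtype.ext
  rw [Matrix.SpecialLinearGroup.coe_mul]
  simp only [expDiag_val, Matrix.diagonal_mul_diagonal, ← Real.exp_add, avg_add, Pi.add_apply]
  congr 1
  funext l
  congr 1
  ring

theorem continuous_expDiag {n : ℕ} (hn : n ≠ 0) : Continuous (expDiag hn) := by
  apply Continuous.subtype_mk
  apply Continuous.matrix_diagonal
  unfold avg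
  fun_prop

theorem expDiag_mem {n : ℕ} (hn : n ≠ 0) (t : Fin n → ℝ) : expDiag hn t ∈ posDiag n := by
  refine ⟨fun i j hij => ?_, fun i => ?_⟩
  · simp [expDiag_val, hij]
  · simp [expDiag_val, Real.exp_pos]

theorem exists_expDiag {n : ℕ} (hn : n ≠ 0) {a : SLR n} (ha : a ∈ posDiag n) :
    ∃ t, expDiag hn t = a := by
  have hdiag : a.1 = Matrix.diagonal fun l => a.1 l l := by
    ext k l
    by_cases h : k = l
    · subst h; simp
    · rw [Matrix.diagonal_apply_ne _ h, ha.1 k l h]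
  have hdet : ∏ l, a.1 l l = 1 := by
    have := a.2
    rwa [hdiag, Matrix.det_diagonal] at this
  have havg : avg (fun l => Real.log (a.1 l l)) = 0 := by
    rw [avg, ← Real.log_prod fun l _ => (ha.2 l).ne', hdet]
    simp
  refine ⟨fun l => Real.log (a.1 l l), Subtype.ext ?_⟩
  rw [expDiag_val, havg]
  conv_rhs => rw [hdiag]
  congr 1
  funext l
  rw [sub_zero, Real.exp_log (ha.2 l)]

theorem posDiag_eq_range {n : ℕ} (hn : n ≠ 0) : posDiag n = Set.range (expDiag hn) := by
  ext a
  constructor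
  · exact fun h => exists_expDiag hn h
  · rintro ⟨t, rfl⟩
    exact expDiag_mem hn t

/-! ### A compact orbit contains no lattice vector with a zero coordinate -/

/-- A compact subset of `X` has representatives in `G` whose inverses have bounded entries. -/
theorem exists_bounded_lift {n : ℕ} {Y : Set (SLR n ⧸ GammaZ n)} (hY : IsCompact Y) :
    ∃ R : ℝ, ∀ y ∈ Y, ∃ c : SLR n, (c : SLR n ⧸ GammaZ n) = y ∧ ∀ k l, |c⁻¹.1 k l| < R := by
  let O : ℕ → Set (SLR n) := fun R => {c | ∀ k l, |c⁻¹.1 k l| < R}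
  have hO : ∀ R, IsOpen (O R) := by
    intro R
    have : O R = ⋂ k, ⋂ l, {c : SLR n | |c⁻¹.1 k l| < (R : ℝ)} := by
      ext c
      simp only [O, Set.mem_iInter]
      rfl
    rw [this]
    refine isOpen_iInter_of_finite fun k => isOpen_iInter_of_finite fun l => ?_
    exact isOpen_lt ((continuous_entry n k l).comp continuous_inv).abs continuous_const
  have hmono : Monotone O := fun R S hRS c hc k l => (hc k l).trans_le (by exact_mod_cast hRS)
  obtain ⟨R, hR⟩ := hY.elim_directed_cover
    (fun R => ((↑) : SLR n → SLR n ⧸ GammaZ n) '' O R)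
    (fun R => QuotientGroup.isOpenMap_coe _ (hO R)) (by
      intro y _
      obtain ⟨c, rfl⟩ := QuotientGroup.mk_surjective y
      obtain ⟨R, hR⟩ := exists_nat_gt (∑ k, ∑ l, |c⁻¹.1 k l|)
      refine Set.mem_iUnion.2 ⟨R, c, fun k l => lt_of_le_of_lt ?_ hR, rfl⟩
      calc |c⁻¹.1 k l| ≤ ∑ l, |c⁻¹.1 k l| :=
            Finset.single_le_sum (f := fun l => |c⁻¹.1 k l|)
              (fun _ _ => abs_nonneg _) (Finset.mem_univ l)
        _ ≤ _ := Finset.single_le_sum (f := fun k => ∑ l, |c⁻¹.1 k l|)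
              (fun _ _ => Finset.sum_nonneg fun _ _ => abs_nonneg _) (Finset.mem_univ k))
    (Monotone.directed_le fun R S hRS => Set.image_mono (hmono hRS))
  refine ⟨R, fun y hy => ?_⟩
  obtain ⟨c, hc, rfl⟩ := hR hy
  exact ⟨c, rfl, hc⟩

/-- If the `A`-orbit of `gΓ` stays in a compact set, no nonzero vector of the lattice `gℤⁿ` has a
zero coordinate: otherwise some one-parameter subgroup of `A` would contract it to zero. -/
theorem coord_ne_zero {n : ℕ} (hn : n ≠ 0) {Y : Set (SLR n ⧸ GammaZ n)} (hY : IsCompact Y)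
    (g : SLR n) (hg : ∀ t, expDiag hn t • (g : SLR n ⧸ GammaZ n) ∈ Y)
    (v : Fin n → ℤ) (hv : v ≠ 0) (k : Fin n) :
    (g.1 *ᵥ fun l => (v l : ℝ)) k ≠ 0 := by
  intro hk
  set w : Fin n → ℝ := g.1 *ᵥ fun l => (v l : ℝ) with hw
  obtain ⟨R, hR⟩ := exists_bounded_lift hY
  have hn0 : (0 : ℝ) < n := by exact_mod_cast Nat.pos_of_ne_zero hn
  have hR0 : 0 < R := by
    obtain ⟨c, -, hc⟩ := hR _ (hg 0)
    exact (abs_nonneg _).trans_lt (hc k k)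
  have key : ∀ T : ℝ, 1 ≤ R * (Real.exp (-T) * ∑ l, |w l|) := by
    intro T
    -- the average of `n * T • e_k` is `T`, so every coordinate but the `k`-th is scaled by `exp (-T)`
    set t : Fin n → ℝ := Pi.single k (n * T) with ht
    have havg : avg t = T := by
      rw [avg, ht, Finset.sum_pi_single']
      simp
      field_simp
    obtain ⟨c, hc, hcR⟩ := hR _ (hg t)
    obtain ⟨γ, hγ⟩ : c⁻¹ * (expDiag hn t * g) ∈ GammaZ n := by
      rw [← QuotientGroup.eq, hc]
      rfl
    have hγv : c⁻¹.1 *ᵥ ((expDiag hn t).1 *ᵥ w) = fun l => ((γ.1 *ᵥ v) l : ℝ) := by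
      rw [hw, Matrix.mulVec_mulVec, Matrix.mulVec_mulVec]
      have h1 : c⁻¹.1 * ((expDiag hn t).1 * g.1) = γ.1.map (Int.castRingHom ℝ) :=
        (congrArg Subtype.val hγ).symm
      rw [Matrix.mul_assoc, h1]
      funext l
      simp [Matrix.mulVec, dotProduct]
    have hγv0 : γ.1 *ᵥ v ≠ 0 := by
      intro h0
      apply hv
      have h1 : (γ⁻¹).1 *ᵥ (γ.1 *ᵥ v) = v := by
        rw [Matrix.mulVec_mulVec, ← Matrix.SpecialLinearGroup.coe_mul, inv_mul_cancel]
        simp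
      rw [← h1, h0, Matrix.mulVec_zero]
    obtain ⟨m, hm⟩ := Function.ne_iff.1 hγv0
    have h1 : (1 : ℝ) ≤ |((γ.1 *ᵥ v) m : ℝ)| := by
      exact_mod_cast Int.one_le_abs hm
    have hscale : ∀ l, |((expDiag hn t).1 *ᵥ w) l| = Real.exp (-T) * |w l| := by
      intro l
      rw [expDiag_val, Matrix.mulVec_diagonal, abs_mul, Real.abs_exp, havg]
      by_cases hl : l = k
      · rw [hl, hk]; simp
      · simp [ht, hl]
    calc (1 : ℝ) ≤ |((γ.1 *ᵥ v) m : ℝ)| := h1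
      _ = |∑ l, c⁻¹.1 m l * ((expDiag hn t).1 *ᵥ w) l| := by
          rw [← congrFun hγv m]; rfl
      _ ≤ ∑ l, |c⁻¹.1 m l * ((expDiag hn t).1 *ᵥ w) l| := Finset.abs_sum_le_sum_abs _ _
      _ ≤ ∑ l, R * (Real.exp (-T) * |w l|) := by
          refine Finset.sum_le_sum fun l _ => ?_
          rw [abs_mul, hscale]
          exact mul_le_mul_of_nonneg_right (hcR m l).le (by positivity)
      _ = _ := by rw [← Finset.mul_sum, ← Finset.mul_sum]
  have hlim : Filter.Tendsto (fun T : ℝ => R * (Real.exp (-T) * ∑ l, |w l|)) Filter.atTop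
      (nhds (R * (0 * ∑ l, |w l|))) :=
    ((Real.tendsto_exp_neg_atTop_nhds_zero).mul_const _).const_mul _
  have := ge_of_tendsto' hlim key
  simp at this
  linarith

/-! ### Arithmetic of the stabilizer -/

/-- If `a g = g M` with `a` diagonal and `M` integral, then multiplying the `l`-th coordinates by
`p(a_l)`, for `p ∈ ℤ[X]`, preserves the lattice `gℤⁿ`. -/
theorem exists_aeval_vec {n : ℕ} (g : Matrix (Fin n) (Fin n) ℝ) (a : Fin n → ℝ)
    (M : Matrix (Fin n) (Fin n) ℤ)
    (hM : Matrix.diagonal a * g = g * M.map (Int.castRingHom ℝ)) (p : Polynomial ℤ) :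
    ∀ v : Fin n → ℤ, ∃ v' : Fin n → ℤ, ∀ l,
      (g *ᵥ fun m => (v' m : ℝ)) l = Polynomial.aeval (a l) p * (g *ᵥ fun m => (v m : ℝ)) l := by
  have hX : ∀ v : Fin n → ℤ, ∀ l, (g *ᵥ fun m => ((M *ᵥ v) m : ℝ)) l =
      a l * (g *ᵥ fun m => (v m : ℝ)) l := by
    intro v l
    have h1 : (fun m => ((M *ᵥ v) m : ℝ)) = M.map (Int.castRingHom ℝ) *ᵥ fun m => (v m : ℝ) := by
      funext m
      simp [Matrix.mulVec, dotProduct]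
    rw [h1, Matrix.mulVec_mulVec, ← hM, ← Matrix.mulVec_mulVec, Matrix.mulVec_diagonal]
  induction p using Polynomial.induction_on with
  | C c =>
    intro v
    refine ⟨fun m => c * v m, fun l => ?_⟩
    simp [Matrix.mulVec, dotProduct, Finset.mul_sum]
    refine Finset.sum_congr rfl fun m _ => by ring
  | add p q hp hq =>
    intro v
    obtain ⟨v₁, h₁⟩ := hp v
    obtain ⟨v₂, h₂⟩ := hq v
    refine ⟨fun m => v₁ m + v₂ m, fun l => ?_⟩
    rw [map_add, add_mul, ← h₁, ← h₂]
    simp [Matrix.mulVec, dotProduct, mul_add, Finset.sum_add_distrib]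
  | monomial k c h =>
    intro v
    obtain ⟨v', h'⟩ := h v
    refine ⟨M *ᵥ v', fun l => ?_⟩
    rw [hX, h', pow_succ, ← mul_assoc (Polynomial.C c), map_mul _ _ Polynomial.X,
      Polynomial.aeval_X]
    ring

/-- The derivative at `a k` of `∏ (X - a_l)` is `∏_{l ≠ k} (a_k - a_l)`. -/
theorem eval_derivative_prod {n : ℕ} (a : Fin n → ℝ) (k : Fin n) :
    (Polynomial.derivative (∏ l, (Polynomial.X - Polynomial.C (a l)))).eval (a k) =
      ∏ l ∈ Finset.univ.erase k, (a k - a l) := by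
  rw [← Finset.mul_prod_erase _ _ (Finset.mem_univ k)]
  simp [Polynomial.eval_prod]

/-- Let `a g = g M` with `a` diagonal and `M` integral, where no nonzero vector of `gℤⁿ` has a zero
coordinate. The `a_l` are the roots of the integral polynomial `charpoly M`, and an integral
polynomial vanishing at one of them vanishes at all of them. Applied to the derivative of
`charpoly M`, this says that all of them are simple as soon as one of them is. -/
theorem no_mixed_multiplicity {n : ℕ} (g : SLR n) (a : Fin n → ℝ)
    (M : Matrix (Fin n) (Fin n) ℤ)
    (hM : Matrix.diagonal a * g.1 = g.1 * M.map (Int.castRingHom ℝ))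
    (hg : ∀ v : Fin n → ℤ, v ≠ 0 → ∀ k, (g.1 *ᵥ fun l => (v l : ℝ)) k ≠ 0)
    {i j : Fin n} (hij : i ≠ j) (haij : a i = a j) (k : Fin n) (hk : ∀ l, l ≠ k → a k ≠ a l) :
    False := by
  have hchar : M.charpoly.map (Int.castRingHom ℝ) =
      ∏ l, (Polynomial.X - Polynomial.C (a l)) := by
    rw [← Matrix.charpoly_map, ← Matrix.charpoly_diagonal]
    have hconj : M.map (Int.castRingHom ℝ) = (g⁻¹).1 * Matrix.diagonal a * g.1 := by
      rw [Matrix.mul_assoc, hM, ← Matrix.mul_assoc, ← Matrix.SpecialLinearGroup.coe_mul,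
        inv_mul_cancel]
      simp
    obtain ⟨u, hu, hu'⟩ : ∃ u : (Matrix (Fin n) (Fin n) ℝ)ˣ, u.val = g.1 ∧ u⁻¹.val = (g⁻¹).1 :=
      ⟨⟨g.1, (g⁻¹).1,
        by rw [← Matrix.SpecialLinearGroup.coe_mul, mul_inv_cancel]; simp,
        by rw [← Matrix.SpecialLinearGroup.coe_mul, inv_mul_cancel]; simp⟩, rfl, rfl⟩
    rw [hconj, ← hu, ← hu', Matrix.coe_units_inv]
    exact Matrix.charpoly_units_conj' u (Matrix.diagonal a)
  have heval : ∀ m, Polynomial.aeval (a m) (Polynomial.derivative M.charpoly) =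
      ∏ l ∈ Finset.univ.erase m, (a m - a l) := by
    intro m
    rw [← eval_derivative_prod, ← hchar, Polynomial.derivative_map, Polynomial.eval_map,
      Polynomial.aeval_def, algebraMap_int_eq]
  have hv : (Pi.single i 1 : Fin n → ℤ) ≠ 0 := by simp
  obtain ⟨v', hv'⟩ := exists_aeval_vec g.1 a M hM (Polynomial.derivative M.charpoly) (Pi.single i 1)
  have hi : (g.1 *ᵥ fun l => (v' l : ℝ)) i = 0 := by
    rw [hv', heval, Finset.prod_eq_zero (i := j) (by simp [hij.symm]) (by rw [haij, sub_self]),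
      zero_mul]
  have hv0 : v' = 0 := by
    by_contra h
    exact hg v' h i hi
  have hk0 := hv' k
  rw [heval, hv0] at hk0
  have hz : (g.1 *ᵥ fun l => (((0 : Fin n → ℤ) l : ℤ) : ℝ)) k = 0 := by
    simp [Matrix.mulVec, dotProduct]
  rw [hz] at hk0
  rcases mul_eq_zero.1 hk0.symm with h | h
  · obtain ⟨l, hl, hl0⟩ := Finset.prod_eq_zero_iff.1 h
    exact hk l (Finset.ne_of_mem_erase hl) (sub_eq_zero.1 hl0)
  · exact hg _ hv k h

/-! ### Cocompactness of the stabilizer -/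

/-- The stabilizer in `ℝⁿ` of a point of `X`, for the action through `expDiag`. -/
def stab {n : ℕ} (hn : n ≠ 0) (z : SLR n ⧸ GammaZ n) : AddSubgroup (Fin n → ℝ) where
  carrier := {t | expDiag hn t • z = z}
  zero_mem' := by simp [expDiag_zero]
  add_mem' {s t} hs ht := by
    simp only [Set.mem_ofPred_eq] at *
    rw [expDiag_add, mul_smul, ht, hs]
  neg_mem' {t} ht := by
    simp only [Set.mem_ofPred_eq] at *
    conv_lhs => rw [← ht]
    rw [← mul_smul, ← expDiag_add, neg_add_cancel, expDiag_zero, one_smul]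

theorem mem_stab {n : ℕ} {hn : n ≠ 0} {z : SLR n ⧸ GammaZ n} {t : Fin n → ℝ} :
    t ∈ stab hn z ↔ expDiag hn t • z = z := Iff.rfl

/-- A compact `A`-orbit is swept out by a bounded part of `A`. The orbit map is open by the open
mapping theorem for transitive actions on Baire spaces, so the images of the balls around `0`
form an open cover of the orbit. -/
theorem exists_bounded_sweep {n : ℕ} (hn : n ≠ 0) {Y : Set (SLR n ⧸ GammaZ n)} (hY : IsCompact Y)
    (z : SLR n ⧸ GammaZ n) (hYz : Y = Set.range fun t => expDiag hn t • z) :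
    ∃ R : ℝ, ∀ t, ∃ s, ‖s‖ < R ∧ t - s ∈ stab hn z := by
  have hinv : ∀ t, ∀ y ∈ Y, expDiag hn t • y ∈ Y := by
    rw [hYz]
    rintro t _ ⟨s, rfl⟩
    exact ⟨t + s, by simp only [expDiag_add, mul_smul]⟩
  have hzY : z ∈ Y := by
    rw [hYz]
    exact ⟨0, by simp [expDiag_zero]⟩
  let _ : AddAction (Fin n → ℝ) Y :=
    { vadd := fun t y => ⟨expDiag hn t • y.1, hinv t y.1 y.2⟩
      zero_vadd := fun y => Subtype.ext (by
        change expDiag hn 0 • y.1 = y.1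
        rw [expDiag_zero, one_smul])
      add_vadd := fun s t y => Subtype.ext (by
        change expDiag hn (s + t) • y.1 = expDiag hn s • (expDiag hn t • y.1)
        rw [expDiag_add, mul_smul]) }
  have _ : ContinuousVAdd (Fin n → ℝ) Y := ⟨by
    apply Continuous.subtype_mk
    exact ((continuous_expDiag hn).comp continuous_fst).smul
      (continuous_subtype_val.comp continuous_snd)⟩
  have hsurj : ∀ y : Y, ∃ t : Fin n → ℝ, t +ᵥ (⟨z, hzY⟩ : Y) = y := by
    intro y
    obtain ⟨t, ht⟩ : y.1 ∈ Set.range fun t => expDiag hn t • z := hYz ▸ y.2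
    exact ⟨t, Subtype.ext ht⟩
  have _ : AddAction.IsPretransitive (Fin n → ℝ) Y :=
    (AddAction.isPretransitive_iff_base ⟨z, hzY⟩).2 hsurj
  have _ : CompactSpace Y := isCompact_iff_compactSpace.1 hY
  have hopen := isOpenMap_vadd_of_sigmaCompact (G := Fin n → ℝ) (X := Y) ⟨z, hzY⟩
  obtain ⟨R, hR⟩ := (isCompact_univ (X := Y)).elim_directed_cover
    (fun R : ℕ => (fun t : Fin n → ℝ => t +ᵥ (⟨z, hzY⟩ : Y)) '' Metric.ball 0 R)
    (fun R => hopen _ Metric.isOpen_ball) (by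
      intro y _
      obtain ⟨t, ht⟩ := hsurj y
      obtain ⟨R, hR⟩ := exists_nat_gt ‖t‖
      exact Set.mem_iUnion.2 ⟨R, t, by simpa using hR, ht⟩)
    (Monotone.directed_le fun R S hRS =>
      Set.image_mono (Metric.ball_subset_ball (by exact_mod_cast hRS)))
  refine ⟨R, fun t => ?_⟩
  obtain ⟨s, hs, hst⟩ := hR (Set.mem_univ (t +ᵥ (⟨z, hzY⟩ : Y)))
  refine ⟨s, by simpa using hs, ?_⟩
  have h : expDiag hn s • z = expDiag hn t • z := congrArg Subtype.val hst
  rw [mem_stab, sub_eq_neg_add, expDiag_add, mul_smul, ← h, ← mul_smul, ← expDiag_add,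
    neg_add_cancel, expDiag_zero, one_smul]

/-- The root `α_{ij}` in logarithmic coordinates. -/
def rootLin {n : ℕ} (i j : Fin n) : (Fin n → ℝ) →+ ℝ where
  toFun t := t i - t j
  map_zero' := by simp
  map_add' s t := by simp; ring

theorem rootLin_apply {n : ℕ} (i j : Fin n) (t : Fin n → ℝ) : rootLin i j t = t i - t j := rfl

/-- If a homomorphism `f` has cyclic image on a subgroup `Λ` of `ℝⁿ`, then every value of `f` on `Λ`
that is bounded by `B` is attained on a fixed bounded part of `Λ`. -/
theorem exists_bounded_preimage {n : ℕ} (Λ : AddSubgroup (Fin n → ℝ)) (f : (Fin n → ℝ) →+ ℝ)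
    {b : ℝ} (hb : Λ.map f = AddSubgroup.closure {b}) (B : ℝ) :
    ∃ C : ℝ, ∀ x ∈ Λ.map f, |x| ≤ B → ∃ ν ∈ Λ, f ν = x ∧ ‖ν‖ ≤ C := by
  obtain ⟨μ, hμ, hμb⟩ : b ∈ Λ.map f := by
    rw [hb]; exact AddSubgroup.mem_closure_singleton_self b
  by_cases hb0 : b = 0
  · refine ⟨0, fun x h _ => ⟨0, Λ.zero_mem, ?_, by simp⟩⟩
    rw [hb, hb0, AddSubgroup.closure_singleton_zero, AddSubgroup.mem_bot] at h
    rw [h, map_zero]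
  · refine ⟨B / |b| * ‖μ‖, fun x h hx => ?_⟩
    rw [hb] at h
    obtain ⟨m, rfl⟩ := AddSubgroup.mem_closure_singleton.1 h
    refine ⟨m • μ, Λ.zsmul_mem hμ m, by rw [map_zsmul, hμb], ?_⟩
    have hm : |(m : ℝ)| ≤ B / |b| := by
      rwa [le_div_iff₀ (abs_pos.2 hb0), ← abs_mul, ← zsmul_eq_mul]
    calc ‖m • μ‖ = |(m : ℝ)| * ‖μ‖ := by
          rw [← Int.cast_smul_eq_zsmul ℝ, norm_smul, Real.norm_eq_abs]
      _ ≤ _ := mul_le_mul_of_nonneg_right hm (norm_nonneg _)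

/-- If the values of the root on the stabilizer were discrete, the stabilizer would meet `A_α` in a
cocompact subgroup of `A_α`, and so would contain elements of `A_α` whose `k`-th entry dominates
all others, for any `k ≠ i, j`. -/
theorem exists_dominating {n : ℕ} (hn : n ≠ 0) (z : SLR n ⧸ GammaZ n) {R : ℝ}
    (hR : ∀ t, ∃ s, ‖s‖ < R ∧ t - s ∈ stab hn z) {i j k : Fin n} (hki : k ≠ i) (hkj : k ≠ j)
    {b : ℝ} (hb : (stab hn z).map (rootLin i j) = AddSubgroup.closure {b}) :
    ∃ t ∈ stab hn z, t i = t j ∧ ∀ l, l ≠ k → t l < t k := by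
  obtain ⟨C, hC⟩ := exists_bounded_preimage _ _ hb (2 * R)
  -- a stabilizer element close to a far point of `A_α` is moved into `A_α` by a bounded correction
  obtain ⟨T, hT⟩ : ∃ T : ℝ, T = 2 * (R + C) + 1 := ⟨_, rfl⟩
  obtain ⟨e, hek, hel⟩ : ∃ e : Fin n → ℝ, e k = T ∧ ∀ l, l ≠ k → e l = 0 :=
    ⟨Pi.single k T, by simp, fun l hl => by simp [hl]⟩
  obtain ⟨s, hs, hsz⟩ := hR e
  have hsR : ∀ m, |s m| < R := fun m => (norm_le_pi_norm s m).trans_lt hs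
  have hroot : rootLin i j (e - s) = -rootLin i j s := by
    simp only [rootLin_apply, Pi.sub_apply, hel i hki.symm, hel j hkj.symm]
    ring
  have hmem : rootLin i j s ∈ (stab hn z).map (rootLin i j) := by
    rw [← neg_neg (rootLin i j s), ← hroot]
    exact AddSubgroup.neg_mem _ (AddSubgroup.mem_map_of_mem _ hsz)
  have hsB : |rootLin i j s| ≤ 2 * R := by
    have h1 := abs_lt.1 (hsR i)
    have h2 := abs_lt.1 (hsR j)
    rw [rootLin_apply, abs_le]
    constructor <;> linarith [h1.1, h1.2, h2.1, h2.2]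
  obtain ⟨ν, hν, hνs, hνC⟩ := hC _ hmem hsB
  have hνm : ∀ m, |ν m| ≤ C := fun m => (norm_le_pi_norm ν m).trans hνC
  have hij : (e - s + ν) i = (e - s + ν) j := by
    rw [← sub_eq_zero, ← rootLin_apply, map_add, hroot, hνs]
    ring
  have hlk : ∀ l, l ≠ k → (e - s + ν) l < (e - s + ν) k := by
    intro l hl
    simp only [Pi.add_apply, Pi.sub_apply, hek, hel l hl]
    have h1 := abs_lt.1 (hsR l)
    have h2 := abs_lt.1 (hsR k)
    have h3 := abs_le.1 (hνm l)
    have h4 := abs_le.1 (hνm k)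
    linarith [h1.1, h2.2, h3.2, h4.1]
  exact ⟨_, (stab hn z).add_mem hsz hν, hij, hlk⟩

/-- The values of the root on the stabilizer of a point with compact `A`-orbit are dense. -/
theorem dense_root_stab {n : ℕ} (hn : n ≠ 0) (hn3 : 3 ≤ n) {Y : Set (SLR n ⧸ GammaZ n)}
    (hY : IsCompact Y) (z : SLR n ⧸ GammaZ n) (hYz : Y = Set.range fun t => expDiag hn t • z)
    {i j : Fin n} (hij : i ≠ j) :
    Dense ((stab hn z).map (rootLin i j) : Set ℝ) := by
  refine (AddSubgroup.dense_or_cyclic _).resolve_right ?_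
  rintro ⟨b, hb⟩
  obtain ⟨k, hk⟩ : ∃ k, k ∉ ({i, j} : Finset (Fin n)) := by
    by_contra! h
    have h1 : (Finset.univ : Finset (Fin n)).card ≤ ({i, j} : Finset (Fin n)).card :=
      Finset.card_le_card fun k _ => h k
    have h2 : ({i, j} : Finset (Fin n)).card ≤ 2 := Finset.card_le_two
    rw [Finset.card_univ, Fintype.card_fin] at h1
    omega
  simp only [Finset.mem_insert, Finset.mem_singleton, not_or] at hk
  obtain ⟨R, hR⟩ := exists_bounded_sweep hn hY z hYz
  obtain ⟨t, ht, htij, htk⟩ := exists_dominating hn z hR hk.1 hk.2 hb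
  obtain ⟨g, rfl⟩ := QuotientGroup.mk_surjective z
  obtain ⟨γ, hγ⟩ : g⁻¹ * (expDiag hn t * g) ∈ GammaZ n := by
    rw [← QuotientGroup.eq]
    exact (mem_stab.1 ht).symm
  have hM : (expDiag hn t).1 * g.1 = g.1 * γ.1.map (Int.castRingHom ℝ) := by
    have h1 : expDiag hn t * g = g * Matrix.SpecialLinearGroup.map (Int.castRingHom ℝ) γ := by
      rw [hγ, mul_inv_cancel_left]
    exact congrArg Subtype.val h1
  rw [expDiag_val] at hM
  refine no_mixed_multiplicity g _ γ.1 hM (fun v hv k => coord_ne_zero hn hY g ?_ v hv k) hij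
    (by rw [htij]) k (fun l hl => ?_)
  · intro t
    rw [hYz]
    exact ⟨t, rfl⟩
  · have := htk l hl
    exact (Real.exp_lt_exp.2 (by linarith)).ne'

/-! ### Density of the orbits of `A_α` -/

/-- If every compact `A`-minimal subset of `X = SL_n(ℝ)/SL_n(ℤ)` (`n ≥ 3`) is a single
compact `A`-orbit, then every compact `A`-minimal set is `A_α`-minimal for every root `α`. -/
theorem statement_3 (n : ℕ) (hn : 3 ≤ n)
    (ha : ∀ Y : Set (SLR n ⧸ GammaZ n), IsCompact Y → IsMinimalOn (posDiag n) Y →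
      ∃ x : SLR n ⧸ GammaZ n, Y = (· • x) '' posDiag n)
    (i j : Fin n) (hij : i ≠ j)
    (Y : Set (SLR n ⧸ GammaZ n)) (hYc : IsCompact Y) (hYmin : IsMinimalOn (posDiag n) Y) :
    IsMinimalOn (rootKer n i j) Y := by
  have hn0 : n ≠ 0 := by omega
  refine ⟨hYmin.1, fun g hg => hYmin.2.1 g hg.1, fun z hz y hy => ?_⟩
  obtain ⟨x, hx⟩ := ha Y hYc hYmin
  have hYx : Y = Set.range fun t => expDiag hn0 t • x := by
    rw [hx, posDiag_eq_range hn0, ← Set.range_comp]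
    rfl
  -- the orbit can be based at the given point `z`
  have hYz : Y = Set.range fun t => expDiag hn0 t • z := by
    rw [hYx] at hz
    obtain ⟨s, rfl⟩ := hz
    rw [hYx]
    ext w
    constructor
    · rintro ⟨t, rfl⟩
      exact ⟨t - s, by simp only [← mul_smul, ← expDiag_add, sub_add_cancel]⟩
    · rintro ⟨t, rfl⟩
      exact ⟨t + s, by simp only [← mul_smul, ← expDiag_add]⟩
  have hdense := dense_root_stab hn0 hn hYc z hYz hij
  rw [hYz] at hy
  obtain ⟨t, rfl⟩ := hy
  -- `F c` lies in the `A_α`-orbit of `z` whenever `c` is a value of the root on the stabilizer,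
  -- and `F (α t)` is the point to be approximated
  let F : ℝ → SLR n ⧸ GammaZ n := fun c =>
    expDiag hn0 (t - Pi.single i (rootLin i j t - c)) • z
  have hF : Continuous F := by
    have h1 : Continuous fun c : ℝ => t - Pi.single i (rootLin i j t - c) :=
      continuous_const.sub ((continuous_single i).comp (continuous_const.sub continuous_id))
    exact ((continuous_expDiag hn0).comp h1).smul continuous_const
  have hFt : F (rootLin i j t) = expDiag hn0 t • z := by simp [F]
  change expDiag hn0 t • z ∈ _
  rw [← hFt]
  refine closure_mono ?_ (image_closure_subset_closure_image hF ⟨_, hdense (rootLin i j t), rfl⟩)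
  rintro _ ⟨_, ⟨ν, hν, rfl⟩, rfl⟩
  refine ⟨expDiag hn0 (t - Pi.single i (rootLin i j t - rootLin i j ν) - ν),
    ⟨expDiag_mem hn0 _, ?_⟩, ?_⟩
  · rw [expDiag_val, Matrix.diagonal_apply_eq, Matrix.diagonal_apply_eq]
    congr 2
    simp [rootLin_apply, hij.symm]
    ring
  · change expDiag hn0 _ • z = F _
    conv_lhs => rw [← mem_stab.1 hν, ← mul_smul, ← expDiag_add, sub_add_cancel]
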